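/- Let G ⊆ P_n be a stabilizer group of dimension n − k with distance d(G) ≥ 2, and let A₁(G) be the number of elements of G of weight 1. Then the average weight over the whole group G satisfies 4·Σ_{g ∈ G} wt(g) = 2^{n−k}·(3n − A₁(G)); equivalently, the average weight of the stabilizer group elements equals (3n − A₁(G))/4. -/

import Mathlib

open scoped Classical

noncomputable section

/-- Pauli strings modulo phase, indexed by a finite type. -/
abbrev PauliT (ι : Type) : Type := ι → ZMod 2 × ZMod 2

abbrev Pauli (n : ℕ) : Type := PauliT (Fin n)

variable {ι : Type} [Fintype ι]

/-- Weight of a Pauli string. -/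
def wt (v : PauliT ι) : ℕ := (Finset.univ.filter fun i => v i ≠ 0).card

/-- Support of a Pauli string. -/
def suppF (v : PauliT ι) : Finset ι := Finset.univ.filter fun i => v i ≠ 0

/-- Symplectic form encoding commutation. -/
def sympl (u v : PauliT ι) : ZMod 2 :=
  ∑ i, ((u i).1 * (v i).2 + (u i).2 * (v i).1)

/-- `G` is a stabilizer group (isotropic subspace). -/
def IsStabilizer (G : Submodule (ZMod 2) (PauliT ι)) : Prop :=
  ∀ u ∈ G, ∀ v ∈ G, sympl u v = 0

/-- Membership in the symplectic dual `G^⊥`. -/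
def inDual (G : Submodule (ZMod 2) (PauliT ι)) (v : PauliT ι) : Prop :=
  ∀ g ∈ G, sympl v g = 0

/-- Distance: minimum weight of an element of `G^⊥ \ G`, `⊤` if none exists. -/
def distG (G : Submodule (ZMod 2) (PauliT ι)) : ℕ∞ :=
  sInf ((fun v => (wt v : ℕ∞)) '' {v | inDual G v ∧ v ∉ G})

/-- `g` is an `𝔽₂`-basis (indexed family) of `G`. -/
def IsBasisFam {r : ℕ} (G : Submodule (ZMod 2) (PauliT ι)) (g : Fin r → PauliT ι) : Prop :=
  LinearIndependent (ZMod 2) g ∧ Submodule.span (ZMod 2) (Set.range g) = G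

/-- The weight of a stabilizer group: optimal maximum generator weight over bases. -/
def Wgt (G : Submodule (ZMod 2) (PauliT ι)) : ℕ∞ :=
  ⨅ (r : ℕ) (g : Fin r → PauliT ι) (_ : IsBasisFam G g),
    Finset.univ.sup fun i => (wt (g i) : ℕ∞)

/-- Optimal weight over all `[[n,k,d]]` stabilizer codes. -/
def Wopt (n k : ℕ) (d : ℕ∞) : ℕ∞ :=
  ⨅ (G : Submodule (ZMod 2) (Pauli n))
    (_ : IsStabilizer G ∧ Module.finrank (ZMod 2) ↥G = n - k ∧ distG G = d),
    Wgt G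

/-- Weight enumerator: number of elements of `G` of weight `j`. -/
def Aj (G : Submodule (ZMod 2) (PauliT ι)) (j : ℕ) : ℕ :=
  Nat.card {g : PauliT ι // g ∈ G ∧ wt g = j}

/-- A weight-optimal generating set. -/
def IsWeightOptimalBasis {r : ℕ} (G : Submodule (ZMod 2) (PauliT ι))
    (g : Fin r → PauliT ι) : Prop :=
  IsBasisFam G g ∧ Monotone (fun i => wt (g i)) ∧
    ∀ h : Fin r → PauliT ι, IsBasisFam G h → Monotone (fun i => wt (h i)) →
      ∀ i, wt (g i) ≤ wt (h i)

/-- Set of average generator weights over all bases of `G`. -/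
def WavgSet (G : Submodule (ZMod 2) (PauliT ι)) : Set ℚ :=
  {x | ∃ (r : ℕ) (g : Fin r → PauliT ι), IsBasisFam G g ∧
        x = (∑ i, (wt (g i) : ℚ)) / (r : ℚ)}

/-- Splitting of Pauli strings along a bipartition given by a predicate. -/
def splitEquiv (p : ι → Prop) :
    PauliT ι ≃ₗ[ZMod 2] PauliT {x // p x} × PauliT {x // ¬ p x} :=
  (LinearEquiv.funCongrLeft (ZMod 2) (ZMod 2 × ZMod 2) (Equiv.sumCompl p)).trans
    (LinearEquiv.sumArrowLequivProdArrow _ _ _ _)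

/-- Tensor product of subspaces along a bipartition. -/
def tensorAlong (p : ι → Prop)
    (GA : Submodule (ZMod 2) (PauliT {x // p x}))
    (GB : Submodule (ZMod 2) (PauliT {x // ¬ p x})) :
    Submodule (ZMod 2) (PauliT ι) :=
  (GA.prod GB).comap (splitEquiv p).toLinearMap

/-- Decomposability as a tensor product over a nontrivial bipartition. -/
def Decomposable (G : Submodule (ZMod 2) (PauliT ι)) : Prop :=
  ∃ p : ι → Prop, (∃ x, p x) ∧ (∃ x, ¬ p x) ∧
    ∃ (GA : Submodule (ZMod 2) (PauliT {x // p x}))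
      (GB : Submodule (ZMod 2) (PauliT {x // ¬ p x})),
      G = tensorAlong p GA GB

/-- Identification of `Pauli (n₁+n₂)` with `Pauli n₁ × Pauli n₂`. -/
def pauliSumEquiv (n₁ n₂ : ℕ) :
    Pauli (n₁ + n₂) ≃ₗ[ZMod 2] Pauli n₁ × Pauli n₂ :=
  (LinearEquiv.funCongrLeft (ZMod 2) (ZMod 2 × ZMod 2) finSumFinEquiv).trans
    (LinearEquiv.sumArrowLequivProdArrow _ _ _ _)

/-- Tensor product of stabilizer subspaces on `n₁` and `n₂` qubits. -/
def tensorFin {n₁ n₂ : ℕ} (G₁ : Submodule (ZMod 2) (Pauli n₁))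
    (G₂ : Submodule (ZMod 2) (Pauli n₂)) :
    Submodule (ZMod 2) (Pauli (n₁ + n₂)) :=
  (G₁.prod G₂).comap (pauliSumEquiv n₁ n₂).toLinearMap


def sg (i : ι) (p : ZMod 2 × ZMod 2) : PauliT ι := Pi.single i p

def chi2 (x : ZMod 2) : ℤ := if x = 0 then 1 else -1

lemma chi2_one_add (a : ZMod 2) : chi2 (a + 1) = - chi2 a := by
  unfold chi2
  revert a
  decide

lemma chi2_local (g : ZMod 2 × ZMod 2) :
    (4 * (if g ≠ 0 then 1 else 0) : ℤ) =
      3 - ∑ p : ZMod 2 × ZMod 2,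
        if p ≠ 0 then chi2 (p.1 * g.2 + p.2 * g.1) else 0 := by
  unfold chi2
  revert g
  decide

lemma sympl_add_right (u v w : PauliT ι) : sympl u (v + w) = sympl u v + sympl u w := by
  simp only [sympl, ← Finset.sum_add_distrib]
  refine Finset.sum_congr rfl fun i _ => ?_
  simp only [Pi.add_apply, Prod.fst_add, Prod.snd_add]
  ring

lemma sympl_single (i : ι) (p : ZMod 2 × ZMod 2) (g : PauliT ι) :
    sympl (sg i p) g = p.1 * (g i).2 + p.2 * (g i).1 := by
  unfold sympl sg
  rw [Finset.sum_eq_single i]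
  · simp
  · intro j _ hj
    simp [Pi.single_eq_of_ne hj]
  · simp

lemma wt_single (i : ι) (p : ZMod 2 × ZMod 2) (hp : p ≠ 0) :
    wt (sg i p) = 1 := by
  unfold wt sg
  rw [Finset.card_eq_one]
  refine ⟨i, ?_⟩
  ext j
  by_cases h : j = i
  · subst h; simp [hp]
  · simp [h]

lemma chi2_sum (G : Submodule (ZMod 2) (PauliT ι)) [Fintype ↥G] (v : PauliT ι) :
    ∑ g : ↥G, chi2 (sympl v (g : PauliT ι)) =
      if inDual G v then (Fintype.card ↥G : ℤ) else 0 := by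
  split_ifs with h
  · rw [Finset.sum_congr rfl (g := fun _ => (1 : ℤ))]
    · simp
    · intro g _
      simp [h g g.2, chi2]
  · unfold inDual at h
    push Not at h
    obtain ⟨g0, hg0, hne⟩ := h
    have h1 : sympl v g0 = 1 := by
      revert hne
      generalize sympl v g0 = a
      revert a
      decide
    have := Equiv.sum_comp (Equiv.addRight (⟨g0, hg0⟩ : ↥G))
      (fun g : ↥G => chi2 (sympl v (g : PauliT ι)))
    simp only [Equiv.coe_addRight, Submodule.coe_add, sympl_add_right, h1, chi2_one_add,
      Finset.sum_neg_distrib] at this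
    linarith

lemma inDual_iff (G : Submodule (ZMod 2) (PauliT ι)) (hG : IsStabilizer G)
    (hd : 2 ≤ distG G) (v : PauliT ι) (hv : wt v = 1) : inDual G v ↔ v ∈ G := by
  constructor
  · intro h
    by_contra hn
    have h2 : distG G ≤ (wt v : ℕ∞) := sInf_le ⟨v, ⟨h, hn⟩, rfl⟩
    rw [hv] at h2
    have := hd.trans h2
    exact absurd this (by decide)
  · intro h g hg
    exact hG v h g hg

lemma Aj_one (G : Submodule (ZMod 2) (PauliT ι)) :
    (Aj G 1 : ℤ) = ∑ i : ι, ∑ p : ZMod 2 × ZMod 2,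
      if p ≠ 0 then (if sg i p ∈ G then 1 else 0) else 0 := by
  have h : Aj G 1 = (Finset.univ.filter fun x : ι × (ZMod 2 × ZMod 2) =>
      x.2 ≠ 0 ∧ sg x.1 x.2 ∈ G).card := by
    unfold Aj
    rw [Nat.card_eq_fintype_card, Fintype.card_subtype]
    symm
    refine Finset.card_bij (fun x _ => sg x.1 x.2) ?_ ?_ ?_
    · rintro ⟨i, p⟩ hx
      simp only [Finset.mem_filter, Finset.mem_univ, true_and] at hx ⊢
      exact ⟨hx.2, wt_single i p hx.1⟩
    · rintro ⟨i, p⟩ hx ⟨j, q⟩ hy hxy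
      simp only [Finset.mem_filter, Finset.mem_univ, true_and] at hx hy
      unfold sg at hxy
      dsimp only at hxy
      have hij : i = j := by
        by_contra hne
        have := congrFun hxy i
        rw [Pi.single_eq_same, Pi.single_eq_of_ne hne] at this
        exact hx.1 this
      subst hij
      have := congrFun hxy i
      rw [Pi.single_eq_same, Pi.single_eq_same] at this
      rw [this]
    · intro g hg
      simp only [Finset.mem_filter, Finset.mem_univ, true_and] at hg
      obtain ⟨hgG, hw⟩ := hg
      unfold wt at hw
      obtain ⟨i, hi⟩ := Finset.card_eq_one.mp hw
      have hmem : ∀ j, g j ≠ 0 ↔ j = i := by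
        intro j
        have := Finset.ext_iff.mp hi j
        simpa using this
      have hs : sg i (g i) = g := by
        unfold sg
        funext j
        by_cases hj : j = i
        · subst hj; simp
        · rw [Pi.single_eq_of_ne hj]
          by_contra hne
          exact hj ((hmem j).mp (Ne.symm hne))
      refine ⟨(i, g i), ?_, hs⟩
      simp only [Finset.mem_filter, Finset.mem_univ, true_and]
      exact ⟨(hmem i).mpr rfl, by rw [hs]; exact hgG⟩
  rw [h, Finset.card_filter, Fintype.sum_prod_type]
  push_cast
  simp only [ite_and]

/-- for a stabilizer group of dimension `n - k` with distance at least `2`,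
`4 · Σ_{g ∈ G} wt(g) = 2^{n-k} · (3n - A₁(G))`. -/
theorem whole_group_average_weight (n k : ℕ) (G : Submodule (ZMod 2) (Pauli n))
    (hG : IsStabilizer G) (hdim : Module.finrank (ZMod 2) ↥G = n - k)
    (hd : 2 ≤ distG G) :
    (4 * ∑ g : ↥G, wt (g : Pauli n) : ℤ) =
      2 ^ (n - k) * (3 * (n : ℤ) - (Aj G 1 : ℤ)) := by
  have hcard : (Fintype.card ↥G : ℤ) = 2 ^ (n - k) := by
    rw [Module.card_eq_pow_finrank (K := ZMod 2), hdim, ZMod.card]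
    push_cast
    rfl
  have h1 : ∀ g : ↥G, (4 * (wt (g : Pauli n) : ℤ)) =
      3 * n - ∑ i : Fin n, ∑ p : ZMod 2 × ZMod 2,
        if p ≠ 0 then chi2 (sympl (sg i p) (g : Pauli n)) else 0 := by
    intro g
    unfold wt
    rw [Finset.card_filter]
    push_cast
    rw [Finset.mul_sum, Finset.sum_congr rfl fun i _ => chi2_local ((g : Pauli n) i),
      Finset.sum_sub_distrib]
    simp only [sympl_single]
    simp [mul_comm]
  have h2 : ∀ (i : Fin n) (p : ZMod 2 × ZMod 2),
      (∑ g : ↥G, if p ≠ 0 then chi2 (sympl (sg i p) (g : Pauli n)) else 0) =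
      2 ^ (n - k) *
        (if p ≠ 0 then (if sg i p ∈ G then 1 else 0) else 0) := by
    intro i p
    by_cases hp : p = 0
    · simp [hp]
    · simp only [ne_eq, hp, not_false_eq_true, if_true]
      rw [chi2_sum, hcard]
      simp only [inDual_iff G hG hd _ (wt_single i p hp)]
      split_ifs <;> simp
  rw [Aj_one]
  push_cast
  rw [Finset.mul_sum, Finset.sum_congr rfl fun g _ => h1 g, Finset.sum_sub_distrib,
    Finset.sum_comm, mul_sub]
  congr 1
  · rw [Finset.sum_const, Finset.card_univ, nsmul_eq_mul, hcard]
  · rw [Finset.mul_sum]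
    refine Finset.sum_congr rfl fun i _ => ?_
    rw [Finset.sum_comm, Finset.mul_sum]
    exact Finset.sum_congr rfl fun p _ => h2 i p

end
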